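/- Let n and l be positive integers and let p, q, γ, β be real numbers satisfying 1 ≤ q ≤ p ≤ nq/(n − lq), n > lq, and γ/p = β − l + n(1/q − 1/p) > −n/p. Then there exists a constant C > 0 such that for every smooth compactly supported function u on ℝⁿ one has (∫_{ℝⁿ} |x|^γ |u(x)|^p dx)^{1/p} ≤ C (∫_{ℝⁿ} |x|^{βq} |∇^l u(x)|^q dx)^{1/q}. -/

import Mathlib

/-!
Write `d` for the dimension and `‖|x|^a f‖_p` for the weighted norm `wNorm`. Everything reduces to
first derivatives: `hardy_order` applies the first-order inequality to `u`, then the inequality of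
lower order to `Du`, which takes values in another finite-dimensional space, with intermediate
exponents chosen so that each step gains the same amount of `1 / q`.

The first-order inequality (`hardy_step`) is an interpolation by Hölder's inequality
(`wNorm_interpolate`) between its two extreme cases.

* `p = q` (`hardy_diag`). From `u(x) = -∫₁^∞ Du(tx) x dt` one has the pointwise bound
  `|u(x)| ≤ ∫₁^∞ |x| |Du(tx)| dt`. Hölder's inequality in `t` with weight `t^(-1-δ)`, where
  `δ = b + d / q - 1 > 0`, followed by Tonelli's theorem and the dilation `x ↦ tx`, gives
  `‖|x|^(b-1) u‖_q ≤ δ⁻¹ ‖|x|^b Du‖_q`.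
* `1 / p = 1 / q - 1 / d` (`hardy_endpoint`). The Gagliardo-Nirenberg-Sobolev inequality applied
  to `|x|^b u` bounds `‖|x|^b u‖_p` by `‖|x|^b Du‖_q` and `‖|x|^(b-1) u‖_q`, and the latter is
  controlled by the first case. Since `|x|^b` is not `C¹` at the origin, it is approximated by
  `|x|^(2k) (|x|² + ε)^(-s)` with `2k - 2s = b` and `s ≥ 0`. This weight and its derivative are
  bounded, uniformly in `ε`, by `|x|^b` and a multiple of `|x|^(b-1)`, so Fatou's lemma suffices
  as `ε → 0`.

The norms are computed as Lebesgue integrals in `[0, ∞]`. Passing to Bochner integrals requires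
the right-hand side to be finite (`wNorm_ne_top`): the hypotheses force `β q > l q - d > -d`.
-/

open MeasureTheory Real

open scoped ENNReal NNReal

/-! ### Weighted norms and interpolation -/

/-- The weighted norm `‖|x|^a f‖_{L^p}`, with values in `[0, ∞]`. The value of `|x|^a` at the origin
is irrelevant for measures without atoms. -/
noncomputable def wNorm {E F : Type*} [NormedAddCommGroup E] [MeasurableSpace E]
    [NormedAddCommGroup F] (μ : Measure E) (a p : ℝ) (f : E → F) : ℝ≥0∞ :=
  eLpNorm (fun x => ‖x‖ ^ a * ‖f x‖) (ENNReal.ofReal p) μ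

section

variable {E F : Type*} [NormedAddCommGroup E] [MeasurableSpace E] [NormedAddCommGroup F]

lemma wNorm_rpow (μ : Measure E) {a p : ℝ} (hp : 0 < p) (f : E → F) :
    wNorm μ a p f ^ p = ∫⁻ x, ENNReal.ofReal (‖x‖ ^ (a * p)) * ‖f x‖ₑ ^ p ∂μ := by
  rw [wNorm, eLpNorm_eq_lintegral_rpow_enorm_toReal (by simpa using hp) ENNReal.ofReal_ne_top,
    ENNReal.toReal_ofReal hp.le, ← ENNReal.rpow_mul, one_div_mul_cancel hp.ne', ENNReal.rpow_one]
  refine lintegral_congr fun x => ?_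
  rw [enorm_mul, enorm_norm, ENNReal.mul_rpow_of_nonneg _ _ hp.le,
    Real.enorm_of_nonneg (by positivity), ENNReal.ofReal_rpow_of_nonneg (by positivity) hp.le,
    ← Real.rpow_mul (norm_nonneg x)]

/-- Interpolation by Hölder's inequality: both the reciprocal exponent and the power of the weight
are the convex combinations with coefficients `θ`, `1 - θ`. -/
lemma wNorm_interpolate [BorelSpace E] (μ : Measure E) [NullSingletonClass μ] {a b α q r p θ : ℝ}
    (hq : 0 < q) (hr : 0 < r) (hp : 0 < p) (h0 : 0 ≤ θ) (h1 : θ ≤ 1)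
    (hpθ : 1 / p = θ / q + (1 - θ) / r) (hα : α = θ * a + (1 - θ) * b)
    {f : E → F} (hf : Continuous f) :
    wNorm μ α p f ≤ wNorm μ a q f ^ θ * wNorm μ b r f ^ (1 - θ) := by
  have h1' : 0 ≤ 1 - θ := by linarith
  have hA : 0 ≤ θ * p / q := by positivity
  have hB : 0 ≤ (1 - θ) * p / r := by positivity
  have hAB : θ * p / q + (1 - θ) * p / r = 1 := by
    have : p * (1 / p) = p * (θ / q + (1 - θ) / r) := by rw [hpθ]
    rw [mul_one_div_cancel hp.ne'] at this
    linear_combination -this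
  rw [← ENNReal.rpow_le_rpow_iff hp, ENNReal.mul_rpow_of_nonneg _ _ hp.le]
  have e1 : (wNorm μ a q f ^ θ) ^ p = (wNorm μ a q f ^ q) ^ (θ * p / q) := by
    rw [← ENNReal.rpow_mul, ← ENNReal.rpow_mul]; congr 1; field_simp
  have e2 : (wNorm μ b r f ^ (1 - θ)) ^ p = (wNorm μ b r f ^ r) ^ ((1 - θ) * p / r) := by
    rw [← ENNReal.rpow_mul, ← ENNReal.rpow_mul]; congr 1; field_simp
  rw [e1, e2, wNorm_rpow μ hp, wNorm_rpow μ hq, wNorm_rpow μ hr]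
  have hfm : Measurable fun x => ‖f x‖ₑ := hf.enorm.measurable
  refine le_trans (lintegral_mono_ae ?_)
    (ENNReal.lintegral_mul_norm_pow_le (by fun_prop) (by fun_prop) hA hB hAB)
  have hne : ∀ᵐ x ∂μ, x ≠ 0 := by
    rw [ae_iff]; simp
  filter_upwards [hne] with x hx
  have hx' : 0 < ‖x‖ := norm_pos_iff.2 hx
  refine le_of_eq ?_
  rw [ENNReal.mul_rpow_of_nonneg _ _ hA, ENNReal.mul_rpow_of_nonneg _ _ hB,
    ENNReal.ofReal_rpow_of_nonneg (by positivity) hA,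
    ENNReal.ofReal_rpow_of_nonneg (by positivity) hB, ← ENNReal.rpow_mul, ← ENNReal.rpow_mul,
    ← Real.rpow_mul hx'.le, ← Real.rpow_mul hx'.le, mul_mul_mul_comm,
    ← ENNReal.ofReal_mul (by positivity), ← Real.rpow_add hx',
    ← ENNReal.rpow_add_of_nonneg _ _ (by positivity) (by positivity)]
  congr 3
  · rw [hα]; field_simp
  · field_simp; ring

end

/-! ### Integration along rays and the case of equal exponents -/

section
variable {E : Type*} [NormedAddCommGroup E] [NormedSpace ℝ E]

/-- The fundamental theorem of calculus along the ray from `x` to infinity. -/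
lemma enorm_le_lintegral_ray {F : Type*} [NormedAddCommGroup F] [NormedSpace ℝ F] {u : E → F}
    (hu : ContDiff ℝ 1 u) (h2u : HasCompactSupport u)
    {x : E} (hx : x ≠ 0) :
    ‖u x‖ₑ ≤ ∫⁻ t in Set.Ioi (1 : ℝ), ‖x‖ₑ * ‖fderiv ℝ u (t • x)‖ₑ := by
  have hx' : 0 < ‖x‖ := norm_pos_iff.2 hx
  obtain ⟨R, hR, hsub⟩ := h2u.isCompact.isBounded.exists_pos_norm_lt
  set T : ℝ := max 1 (R / ‖x‖)
  have hT1 : 1 ≤ T := le_max_left _ _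
  have huT : u (T • x) = 0 := by
    by_contra h
    have h3 := hsub (T • x) (subset_tsupport u h)
    rw [norm_smul, Real.norm_of_nonneg (by linarith)] at h3
    have h4 : R ≤ T * ‖x‖ := (div_le_iff₀ hx').1 (le_max_right _ _)
    linarith
  have hf : ContDiff ℝ 1 (fun t : ℝ => u (t • x)) := by fun_prop
  have key := enorm_sub_le_lintegral_deriv_of_contDiffOn_Icc (f := fun t : ℝ => u (t • x))
    (a := 1) (b := T) hf.contDiffOn hT1
  simp only [huT, one_smul, zero_sub, enorm_neg] at key
  refine key.trans ?_
  rw [restrict_Ioi_eq_restrict_Ici]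
  refine (lintegral_mono_set Set.Icc_subset_Ici_self).trans (lintegral_mono fun t => ?_)
  have hd : HasDerivAt (fun t : ℝ => u (t • x)) (fderiv ℝ u (t • x) x) t := by
    have h1 : HasDerivAt (fun t : ℝ => t • x) x t := by
      simpa using (hasDerivAt_id t).smul_const x
    exact ((hu.differentiable one_ne_zero (t • x)).hasFDerivAt).comp_hasDerivAt t h1
  rw [hd.deriv, mul_comm]
  exact ContinuousLinearMap.le_opENorm _ _

lemma lintegral_comp_smul' [FiniteDimensional ℝ E] [MeasurableSpace E] [BorelSpace E]
    (μ : Measure E) [μ.IsAddHaarMeasure] (H : E → ℝ≥0∞) {t : ℝ}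
    (ht : 0 < t) :
    ∫⁻ x, H (t • x) ∂μ =
      ENNReal.ofReal (t ^ (-(Module.finrank ℝ E : ℝ))) * ∫⁻ x, H x ∂μ := by
  have h := (Homeomorph.smul (isUnit_iff_ne_zero.2 ht.ne').unit :
    E ≃ₜ E).measurableEmbedding.lintegral_map (μ := μ) H
  have h2 : ((Homeomorph.smul (isUnit_iff_ne_zero.2 ht.ne').unit : E ≃ₜ E) : E → E)
    = fun x => t • x := rfl
  rw [h2, Measure.map_addHaar_smul μ ht.ne', lintegral_smul_measure] at h
  rw [← h, Real.rpow_neg ht.le, Real.rpow_natCast, abs_of_pos (by positivity), smul_eq_mul]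

lemma lintegral_Ioi_one_rpow {δ : ℝ} (hδ : 0 < δ) :
    ∫⁻ t in Set.Ioi (1 : ℝ), ENNReal.ofReal (t ^ (-1 - δ)) = ENNReal.ofReal (1 / δ) := by
  rw [← ofReal_integral_eq_lintegral_ofReal
    (integrableOn_Ioi_rpow_of_lt (by linarith) one_pos)
    ((ae_restrict_mem measurableSet_Ioi).mono fun t ht => by
      have : (0 : ℝ) < t := one_pos.trans ht
      positivity), integral_Ioi_rpow_of_lt (by linarith) one_pos]
  congr 1
  rw [Real.one_rpow]
  have : (-1 - δ + 1) = -δ := by ring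
  rw [this, neg_div_neg_eq]

end

section
variable {E F : Type*} [NormedAddCommGroup E] [NormedSpace ℝ E] [FiniteDimensional ℝ E]
  [MeasurableSpace E] [BorelSpace E] [NormedAddCommGroup F] [NormedSpace ℝ F]

/-- The case `p = q`, with the constant `1 / (b + d / q - 1)`. -/
lemma hardy_diag (μ : Measure E) [μ.IsAddHaarMeasure] (hd : 0 < Module.finrank ℝ E) {q b : ℝ}
    (hq : 1 ≤ q) (hb : 1 < b + Module.finrank ℝ E / q)
    {u : E → F} (hu : ContDiff ℝ 1 u) (h2u : HasCompactSupport u) :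
    wNorm μ (b - 1) q u ≤
      ENNReal.ofReal (1 / (b + Module.finrank ℝ E / q - 1)) * wNorm μ b q (fderiv ℝ u) := by
  have : Nontrivial E := Module.nontrivial_of_finrank_pos (R := ℝ) hd
  have hq0 : 0 < q := by linarith
  set d : ℝ := (Module.finrank ℝ E : ℝ) with hd_def
  set δ : ℝ := b + d / q - 1 with hδ_def
  have hδ : 0 < δ := by linarith
  set A : ℝ≥0∞ := ENNReal.ofReal (1 / δ) with hA_def
  have hDu : Continuous (fderiv ℝ u) := hu.continuous_fderiv one_ne_zero
  set H : E → ℝ≥0∞ := fun y => ENNReal.ofReal (‖y‖ ^ (b * q)) * ‖fderiv ℝ u y‖ₑ ^ q with hH_def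
  have hHm : Measurable H := by
    have : Measurable fun y => ‖fderiv ℝ u y‖ₑ := hDu.enorm.measurable
    fun_prop
  -- the exponents add up because `δ * q = b * q + d - q`
  have hδq : δ * q = b * q + d - q := by rw [hδ_def]; field_simp
  have hpt : ∀ x : E, x ≠ 0 →
      ENNReal.ofReal (‖x‖ ^ ((b - 1) * q)) * ‖u x‖ₑ ^ q ≤
        A ^ (q - 1) * ∫⁻ t in Set.Ioi (1 : ℝ),
          ENNReal.ofReal (t ^ ((1 + δ) * (q - 1) - b * q)) * H (t • x) := by
    intro x hx
    have hx' : 0 < ‖x‖ := norm_pos_iff.2 hx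
    have hDx : Measurable fun t : ℝ => ‖fderiv ℝ u (t • x)‖ₑ :=
      (hDu.comp (by fun_prop : Continuous fun t : ℝ => t • x)).enorm.measurable
    have hHol := ENNReal.lintegral_mul_norm_pow_le (μ := volume.restrict (Set.Ioi (1 : ℝ)))
      (f := fun t => ENNReal.ofReal (t ^ (-1 - δ)))
      (g := fun t => ENNReal.ofReal (t ^ ((1 + δ) * (q - 1))) *
        (‖x‖ₑ * ‖fderiv ℝ u (t • x)‖ₑ) ^ q)
      (p := 1 - 1 / q) (q := 1 / q) (by fun_prop) (by fun_prop)
      (by rw [sub_nonneg, div_le_one hq0]; exact hq) (by positivity) (by ring)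
    rw [lintegral_Ioi_one_rpow hδ, ← hA_def] at hHol
    have h1 : ‖u x‖ₑ ≤ A ^ (1 - 1 / q) * (∫⁻ t in Set.Ioi (1 : ℝ),
        ENNReal.ofReal (t ^ ((1 + δ) * (q - 1))) *
        (‖x‖ₑ * ‖fderiv ℝ u (t • x)‖ₑ) ^ q) ^ (1 / q) := by
      refine (enorm_le_lintegral_ray hu h2u hx).trans (le_trans (le_of_eq ?_) hHol)
      refine setLIntegral_congr_fun measurableSet_Ioi fun t ht => ?_
      have ht0 : (0 : ℝ) < t := one_pos.trans ht
      have hq1 : 0 ≤ 1 - 1 / q := by rw [sub_nonneg, div_le_one hq0]; exact hq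
      rw [ENNReal.ofReal_rpow_of_nonneg (by positivity) hq1,
        ENNReal.mul_rpow_of_nonneg _ _ (by positivity : 0 ≤ 1 / q),
        ENNReal.ofReal_rpow_of_nonneg (by positivity) (by positivity : 0 ≤ 1 / q),
        ← ENNReal.rpow_mul, mul_one_div_cancel hq0.ne', ENNReal.rpow_one, ← mul_assoc,
        ← ENNReal.ofReal_mul (by positivity), ← Real.rpow_mul ht0.le, ← Real.rpow_mul ht0.le,
        ← Real.rpow_add ht0]
      have : (-1 - δ) * (1 - 1 / q) + (1 + δ) * (q - 1) * (1 / q) = 0 := by field_simp; ring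
      rw [this, Real.rpow_zero, ENNReal.ofReal_one, one_mul]
    have h2 := ENNReal.rpow_le_rpow h1 hq0.le
    rw [ENNReal.mul_rpow_of_nonneg _ _ hq0.le, ← ENNReal.rpow_mul, ← ENNReal.rpow_mul,
      one_div_mul_cancel hq0.ne', ENNReal.rpow_one,
      (by field_simp : (1 - 1 / q) * q = q - 1)] at h2
    refine (mul_le_mul_right h2 _).trans (le_of_eq ?_)
    rw [mul_left_comm, ← lintegral_const_mul' _ _ ENNReal.ofReal_ne_top]
    congr 1
    refine setLIntegral_congr_fun measurableSet_Ioi fun t ht => ?_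
    have ht0 : (0 : ℝ) < t := one_pos.trans ht
    simp only [hH_def]
    rw [norm_smul, Real.norm_of_nonneg ht0.le, Real.mul_rpow ht0.le hx'.le,
      ENNReal.mul_rpow_of_nonneg _ _ hq0.le, ← ofReal_norm x,
      ENNReal.ofReal_rpow_of_nonneg hx'.le hq0.le, ← mul_assoc, ← mul_assoc, ← mul_assoc,
      ← ENNReal.ofReal_mul (by positivity), ← ENNReal.ofReal_mul (by positivity),
      ← ENNReal.ofReal_mul (by positivity)]
    congr 2
    rw [← mul_assoc (t ^ _), ← Real.rpow_add ht0, mul_comm (‖x‖ ^ _), mul_assoc,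
      ← Real.rpow_add hx']
    congr 2 <;> ring
  have hne : ∀ᵐ x ∂μ, x ≠ 0 := by
    rw [ae_iff]; simp
  rw [← ENNReal.rpow_le_rpow_iff hq0, ENNReal.mul_rpow_of_nonneg _ _ hq0.le,
    wNorm_rpow μ hq0, wNorm_rpow μ hq0]
  calc ∫⁻ x, ENNReal.ofReal (‖x‖ ^ ((b - 1) * q)) * ‖u x‖ₑ ^ q ∂μ
      ≤ ∫⁻ x, A ^ (q - 1) * (∫⁻ t in Set.Ioi (1 : ℝ),
          ENNReal.ofReal (t ^ ((1 + δ) * (q - 1) - b * q)) * H (t • x)) ∂μ :=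
        lintegral_mono_ae (hne.mono hpt)
    _ = A ^ (q - 1) * ∫⁻ t in Set.Ioi (1 : ℝ), ∫⁻ x,
          ENNReal.ofReal (t ^ ((1 + δ) * (q - 1) - b * q)) * H (t • x) ∂μ := by
        rw [lintegral_const_mul' _ _
          (ENNReal.rpow_ne_top_of_nonneg (by linarith) ENNReal.ofReal_ne_top),
          lintegral_lintegral_swap]
        refine Measurable.aemeasurable ?_
        have : Measurable fun z : E × ℝ => H (z.2 • z.1) :=
          hHm.comp (by fun_prop : Continuous fun z : E × ℝ => z.2 • z.1).measurable
        simp only [Function.uncurry_def]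
        fun_prop
    _ = A ^ (q - 1) * ∫⁻ t in Set.Ioi (1 : ℝ),
          ENNReal.ofReal (t ^ (-1 - δ)) * ∫⁻ x, H x ∂μ := by
        congr 1
        refine setLIntegral_congr_fun measurableSet_Ioi fun t ht => ?_
        have ht0 : (0 : ℝ) < t := one_pos.trans ht
        rw [lintegral_const_mul' _ _ ENNReal.ofReal_ne_top, lintegral_comp_smul' μ H ht0,
          ← mul_assoc, ← ENNReal.ofReal_mul (by positivity), ← Real.rpow_add ht0, ← hd_def]
        congr 3
        linear_combination hδq
    _ = A ^ q * ∫⁻ x, H x ∂μ := by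
        rw [lintegral_mul_const _ (by fun_prop), lintegral_Ioi_one_rpow hδ, ← hA_def, ← mul_assoc]
        congr 1
        have hA0 : A ≠ 0 := by simpa [hA_def] using hδ
        conv_lhs => rw [← ENNReal.rpow_one A, ← ENNReal.rpow_mul, one_mul,
          ← ENNReal.rpow_add _ _ hA0 ENNReal.ofReal_ne_top]
        congr 1; ring
end

/-! ### Regularized power weights -/

section
variable {E : Type*} [NormedAddCommGroup E]

/-- A `C¹` regularization of `|x|^b` when `s = k - b / 2`. -/
noncomputable def regWeight (k : ℕ) (s ε : ℝ) (x : E) : ℝ :=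
  (‖x‖ ^ 2) ^ k * (‖x‖ ^ 2 + ε) ^ (-s)

lemma regWeight_contDiff [InnerProductSpace ℝ E] (k : ℕ) (s : ℝ) {ε : ℝ} (hε : 0 < ε) :
    ContDiff ℝ 1 (regWeight k s ε : E → ℝ) := by
  unfold regWeight
  have h1 : ContDiff ℝ 1 fun x : E => ‖x‖ ^ 2 := contDiff_norm_sq ℝ
  exact (h1.pow k).mul ((h1.add contDiff_const).rpow_const_of_ne fun x => by positivity)

/-- The regularized weight at `ε = 0` is `|x|^b`. -/
lemma sq_pow_mul_rpow {r b s : ℝ} {k : ℕ} (hr : 0 < r) (hs : s = k - b / 2) :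
    (r ^ 2) ^ k * (r ^ 2) ^ (-s) = r ^ b := by
  rw [← Real.rpow_natCast (r ^ 2) k, ← Real.rpow_add (by positivity), ← Real.rpow_natCast r 2,
    ← Real.rpow_mul hr.le]
  congr 1
  rw [hs]; push_cast; ring

lemma regWeight_nonneg (k : ℕ) (s : ℝ) {ε : ℝ} (hε : 0 < ε) (x : E) : 0 ≤ regWeight k s ε x := by
  unfold regWeight; positivity

lemma regWeight_le {k : ℕ} {s b ε : ℝ} (hε : 0 < ε) (hs0 : 0 ≤ s) (hs : s = k - b / 2) {x : E}
    (hx : x ≠ 0) : regWeight k s ε x ≤ ‖x‖ ^ b := by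
  have hx' : 0 < ‖x‖ := norm_pos_iff.2 hx
  rw [← sq_pow_mul_rpow hx' hs]
  unfold regWeight
  gcongr ?_ * ?_
  exact Real.rpow_le_rpow_of_nonpos (by positivity) (by linarith) (by linarith)

/-- The derivative of the regularized weight is bounded uniformly in `ε`: the chain rule through
`ρ = |x|²`, with `(ρ + ε)^(-s) ≤ ρ^(-s)` because `s ≥ 0`. -/
lemma norm_fderiv_regWeight_le [InnerProductSpace ℝ E] {k : ℕ} {s b ε : ℝ}
    (hε : 0 < ε) (hs0 : 0 ≤ s) (hs : s = k - b / 2) {x : E} (hx : x ≠ 0) :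
    ‖fderiv ℝ (regWeight k s ε : E → ℝ) x‖ ≤ 2 * (k + s) * ‖x‖ ^ (b - 1) := by
  have hx' : 0 < ‖x‖ := norm_pos_iff.2 hx
  set ρ : ℝ := ‖x‖ ^ 2 with hρ
  have hρ0 : 0 < ρ := by positivity
  have hg : HasDerivAt (fun r : ℝ => r ^ k * (r + ε) ^ (-s))
      (k * ρ ^ (k - 1) * (ρ + ε) ^ (-s) + ρ ^ k * (1 * (-s) * (ρ + ε) ^ (-s - 1))) ρ :=
    (hasDerivAt_pow k ρ).mul
      (((hasDerivAt_id ρ).add_const ε).rpow_const (Or.inl (by simp only [id]; positivity)))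
  have hf := hg.comp_hasFDerivAt x (hasStrictFDerivAt_norm_sq x).hasFDerivAt
  have hfd : fderiv ℝ (regWeight k s ε : E → ℝ) x = _ := hf.fderiv
  have h2 : (2 : ℕ) • innerSL ℝ x = (2 : ℝ) • innerSL ℝ x := by rw [two_nsmul, two_smul]
  rw [hfd, h2, norm_smul, norm_smul, innerSL_apply_norm]
  have hpow : (k : ℝ) * ρ ^ (k - 1) = k * ρ ^ k / ρ := by
    rcases Nat.eq_zero_or_pos k with h | h
    · simp [h]
    · rw [eq_div_iff hρ0.ne', mul_assoc, ← pow_succ, Nat.sub_add_cancel h]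
  have hb1 : (ρ + ε) ^ (-s) ≤ ρ ^ (-s) :=
    Real.rpow_le_rpow_of_nonpos hρ0 (by linarith) (by linarith)
  have hb2 : (ρ + ε) ^ (-s - 1) ≤ ρ ^ (-s) / ρ := by
    rw [← Real.rpow_sub_one hρ0.ne']
    exact Real.rpow_le_rpow_of_nonpos hρ0 (by linarith) (by linarith)
  have hX : ρ ^ k * ρ ^ (-s) = ‖x‖ ^ b := sq_pow_mul_rpow hx' hs
  have hmain : ‖(k * ρ ^ (k - 1) * (ρ + ε) ^ (-s) + ρ ^ k * (1 * (-s) * (ρ + ε) ^ (-s - 1)))‖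
      ≤ (k + s) * (‖x‖ ^ b / ρ) := by
    refine (norm_add_le _ _).trans ?_
    rw [hpow, Real.norm_of_nonneg (by positivity), norm_mul, norm_mul, one_mul, norm_neg,
      Real.norm_of_nonneg (by positivity), Real.norm_of_nonneg hs0,
      Real.norm_of_nonneg (by positivity), ← hX]
    calc k * ρ ^ k / ρ * (ρ + ε) ^ (-s) + ρ ^ k * (s * (ρ + ε) ^ (-s - 1))
        ≤ k * ρ ^ k / ρ * ρ ^ (-s) + ρ ^ k * (s * (ρ ^ (-s) / ρ)) := by gcongr
      _ = _ := by ring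
  have e : ‖x‖ ^ (b - 1) = ‖x‖ ^ b / ρ * ‖x‖ := by
    rw [Real.rpow_sub_one hx'.ne', hρ]; field_simp
  rw [e]
  calc _ ≤ (k + s) * (‖x‖ ^ b / ρ) * (‖(2 : ℝ)‖ * ‖x‖) := by gcongr
    _ = _ := by rw [Real.norm_of_nonneg (by norm_num : (0 : ℝ) ≤ 2)]; ring

lemma tendsto_regWeight {k : ℕ} {s b : ℝ} (hs : s = k - b / 2) {x : E} (hx : x ≠ 0) :
    Filter.Tendsto (fun m : ℕ => regWeight k s (1 / ((m : ℝ) + 1)) x) Filter.atTop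
      (nhds (‖x‖ ^ b)) := by
  have hx' : 0 < ‖x‖ := norm_pos_iff.2 hx
  rw [← sq_pow_mul_rpow hx' hs]
  unfold regWeight
  refine Filter.Tendsto.const_mul _ ?_
  refine Filter.Tendsto.rpow_const ?_ (Or.inl (by positivity))
  simpa using (tendsto_one_div_add_atTop_nhds_zero_nat (𝕜 := ℝ)).const_add (‖x‖ ^ 2)

end

/-! ### The first-order inequality -/

section
variable {E F : Type*} [NormedAddCommGroup E] [InnerProductSpace ℝ E] [FiniteDimensional ℝ E]
  [MeasurableSpace E] [BorelSpace E] [NormedAddCommGroup F] [NormedSpace ℝ F]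
  [FiniteDimensional ℝ F]

/-- The endpoint `1 / r = 1 / q - 1 / d`: the Gagliardo-Nirenberg-Sobolev inequality for the
regularized `|x|^b u`, where the derivative of the weight is absorbed by `hardy_diag`. -/
lemma hardy_endpoint (μ : Measure E) [μ.IsAddHaarMeasure] (hd : 0 < Module.finrank ℝ E)
    {q b r : ℝ} (hq : 1 ≤ q) (hb : 1 < b + Module.finrank ℝ E / q) (hr0 : 0 < r)
    (hr : 1 / r = 1 / q - 1 / Module.finrank ℝ E) :
    ∃ C : ℝ≥0, ∀ u : E → F, ContDiff ℝ 1 u → HasCompactSupport u →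
      wNorm μ b r u ≤ C * wNorm μ b q (fderiv ℝ u) := by
  have : Nontrivial E := Module.nontrivial_of_finrank_pos (R := ℝ) hd
  have hq0 : 0 < q := by linarith
  have hne : ∀ᵐ x ∂μ, x ≠ 0 := by
    rw [ae_iff]; simp
  obtain ⟨k, hk⟩ := exists_nat_ge (b / 2)
  obtain ⟨s, hs⟩ : ∃ s : ℝ, s = k - b / 2 := ⟨_, rfl⟩
  have hs0 : 0 ≤ s := by linarith
  set S : ℝ≥0 := SNormLESNormFDerivOfEqConst F μ (q.toNNReal : ℝ)
  set M : ℝ := 2 * (k + s) with hM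
  have hM0 : 0 ≤ M := by positivity
  set K : ℝ≥0 := (1 / (b + Module.finrank ℝ E / q - 1)).toNNReal
  refine ⟨S * (1 + M.toNNReal * K), fun u hu h2u => ?_⟩
  have hDu : Continuous (fderiv ℝ u) := hu.continuous_fderiv one_ne_zero
  have hbound : ∀ ε : ℝ, 0 < ε → eLpNorm (fun x => regWeight k s ε x • u x) (ENNReal.ofReal r) μ ≤
      (S * (1 + M.toNNReal * K) : ℝ≥0) * wNorm μ b q (fderiv ℝ u) := by
    intro ε hε
    have hφ := regWeight_contDiff (E := E) k s hε
    have hsob := eLpNorm_le_eLpNorm_fderiv_of_eq (F := F) μ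
      (u := fun x => regWeight k s ε x • u x) (hφ.smul hu) h2u.smul_left
      (p := q.toNNReal) (p' := r.toNNReal) (by simpa using hq) hd
      (by rw [NNReal.coe_inv, Real.coe_toNNReal _ hr0.le, Real.coe_toNNReal _ hq0.le]; simpa using hr)
    refine hsob.trans ?_
    have hder : eLpNorm (fderiv ℝ fun x => regWeight k s ε x • u x) (q.toNNReal) μ ≤
        wNorm μ b q (fderiv ℝ u) + ENNReal.ofReal M * wNorm μ (b - 1) q u := by
      have h1 : eLpNorm (fderiv ℝ fun x => regWeight k s ε x • u x) (q.toNNReal) μ ≤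
          eLpNorm ((fun x => ‖x‖ ^ b * ‖fderiv ℝ u x‖) + M • fun x => ‖x‖ ^ (b - 1) * ‖u x‖)
            (q.toNNReal) μ := by
        refine eLpNorm_mono_ae (hne.mono fun x hx => ?_)
        have hf := ((hφ.differentiable one_ne_zero x).hasFDerivAt.smul
          (hu.differentiable one_ne_zero x).hasFDerivAt).fderiv
        have hf' : fderiv ℝ (fun x => regWeight k s ε x • u x) x = _ := hf
        rw [hf']
        refine (norm_add_le _ _).trans (le_trans ?_ (le_abs_self _))
        rw [norm_smul, ContinuousLinearMap.norm_smulRight_apply,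
          Real.norm_of_nonneg (regWeight_nonneg k s hε x)]
        simp only [Pi.add_apply, Pi.smul_apply, smul_eq_mul]
        rw [← mul_assoc]
        gcongr
        · exact regWeight_le hε hs0 hs hx
        · exact norm_fderiv_regWeight_le hε hs0 hs hx
      refine h1.trans ((eLpNorm_add_le ?_ ?_ (by simpa using hq)).trans ?_)
      · have := hDu.norm.measurable
        exact Measurable.aestronglyMeasurable (by fun_prop)
      · have := hu.continuous.norm.measurable
        refine (Measurable.aestronglyMeasurable ?_).const_smul M
        fun_prop
      · rw [eLpNorm_const_smul, Real.enorm_of_nonneg hM0]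
        rfl
    have hdiag := hardy_diag μ hd hq hb hu h2u
    calc _ ≤ (S : ℝ≥0∞) * (wNorm μ b q (fderiv ℝ u) + ENNReal.ofReal M *
          (ENNReal.ofReal (1 / (b + Module.finrank ℝ E / q - 1)) * wNorm μ b q (fderiv ℝ u))) := by
          gcongr
          exact hder.trans (by gcongr)
      _ = _ := by
          push_cast
          change _ = (S : ℝ≥0∞) * (1 + ENNReal.ofReal M * ENNReal.ofReal _) * _
          ring
  have hcongr : wNorm μ b r u = eLpNorm (fun x => ‖x‖ ^ b • u x) (ENNReal.ofReal r) μ :=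
    eLpNorm_congr_norm_ae (Filter.Eventually.of_forall fun x => by simp [norm_smul])
  rw [hcongr]
  refine (Lp.eLpNorm_lim_le_liminf_eLpNorm
    (f := fun (m : ℕ) x => regWeight k s (1 / ((m : ℝ) + 1)) x • u x) (fun m => ?_) _
    (hne.mono fun x hx => (tendsto_regWeight hs hx).smul_const _)).trans ?_
  · exact ((regWeight_contDiff k s (by positivity)).continuous.smul
      hu.continuous).aestronglyMeasurable
  · exact Filter.liminf_le_of_frequently_le'
      (Filter.Frequently.of_forall fun m => hbound _ (by positivity))

/-- The first-order inequality in the whole range `q ≤ p`, `1 / q - 1 / d ≤ 1 / p`. -/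
lemma hardy_step (μ : Measure E) [μ.IsAddHaarMeasure] {q p b α : ℝ} (hq : 1 ≤ q)
    (hqd : q < Module.finrank ℝ E) (hqp : q ≤ p)
    (hp : 1 / q - 1 / (Module.finrank ℝ E : ℝ) ≤ 1 / p)
    (hα : α = b - 1 + Module.finrank ℝ E * (1 / q - 1 / p))
    (hb : 1 < b + Module.finrank ℝ E / q) :
    ∃ C : ℝ≥0, ∀ u : E → F, ContDiff ℝ 1 u → HasCompactSupport u →
      wNorm μ α p u ≤ C * wNorm μ b q (fderiv ℝ u) := by
  have hq0 : 0 < q := by linarith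
  have hp0 : 0 < p := by linarith
  set d : ℝ := (Module.finrank ℝ E : ℝ) with hd_def
  have hd0 : 0 < d := by linarith
  have hd : 0 < Module.finrank ℝ E := Nat.cast_pos.1 hd0
  have : Nontrivial E := Module.nontrivial_of_finrank_pos (R := ℝ) hd
  have hr0 : 0 < 1 / q - 1 / d := by
    rw [sub_pos]; exact one_div_lt_one_div_of_lt hq0 hqd
  obtain ⟨C, hC⟩ := hardy_endpoint (F := F) μ hd (r := 1 / (1 / q - 1 / d)) hq hb
    (by positivity) (by rw [one_div_one_div])
  set K : ℝ≥0 := (1 / (b + d / q - 1)).toNNReal with hK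
  set θ : ℝ := 1 - d * (1 / q - 1 / p) with hθ
  have h0 : 0 ≤ θ := by
    have : d * (1 / q - 1 / p) ≤ d * (1 / d) := by gcongr; linarith
    rw [mul_one_div_cancel hd0.ne'] at this
    linarith
  have h1 : 0 ≤ 1 - θ := by
    have : 1 / p ≤ 1 / q := one_div_le_one_div_of_le hq0 hqp
    have : 0 ≤ d * (1 / q - 1 / p) := mul_nonneg hd0.le (by linarith)
    linarith
  refine ⟨K ^ θ * C ^ (1 - θ), fun u hu h2u => ?_⟩
  have hint := wNorm_interpolate μ (a := b - 1) (b := b) (α := α) (q := q)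
    (r := 1 / (1 / q - 1 / d)) (p := p) (θ := θ) hq0 (by positivity) hp0 h0 (by linarith)
    (by rw [div_div_eq_mul_div, div_one, hθ]; field_simp; ring)
    (by rw [hα, hθ]; ring) hu.continuous
  refine hint.trans ?_
  have hdiag : wNorm μ (b - 1) q u ≤ K * wNorm μ b q (fderiv ℝ u) := hardy_diag μ hd hq hb hu h2u
  calc _ ≤ (K * wNorm μ b q (fderiv ℝ u)) ^ θ * (C * wNorm μ b q (fderiv ℝ u)) ^ (1 - θ) := by
        gcongr
        exact hC u hu h2u
    _ = _ := by
        rw [ENNReal.mul_rpow_of_nonneg _ _ h0, ENNReal.mul_rpow_of_nonneg _ _ h1,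
          mul_mul_mul_comm, ← ENNReal.rpow_add_of_nonneg _ _ h0 h1, add_sub_cancel,
          ENNReal.rpow_one]
        push_cast [ENNReal.coe_rpow_of_nonneg _ h0, ENNReal.coe_rpow_of_nonneg _ h1]
        rfl
end

universe u

/-! ### Higher order -/

section
variable {E : Type u} [NormedAddCommGroup E] [InnerProductSpace ℝ E] [FiniteDimensional ℝ E]
  [MeasurableSpace E] [BorelSpace E]

/-- The inequality of order `l`. The induction replaces `u` by `Du`, so the target space has to
vary; the intermediate exponent `p₁` splits the interval from `1 / q` to `1 / p` into one part
of length `(1 / q - 1 / p) / (l + 1)` for the first derivative and the rest for the others. -/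
lemma hardy_order (μ : Measure E) [μ.IsAddHaarMeasure] (l : ℕ) :
    ∀ {F : Type u} [NormedAddCommGroup F] [NormedSpace ℝ F] [FiniteDimensional ℝ F]
      {p q b α : ℝ}, 1 ≤ q → q ≤ p → l * q < Module.finrank ℝ E →
      1 / q - l / (Module.finrank ℝ E : ℝ) ≤ 1 / p →
      α = b - l + Module.finrank ℝ E * (1 / q - 1 / p) →
      0 < α + Module.finrank ℝ E / p →
      ∃ C : ℝ≥0, ∀ u : E → F, ContDiff ℝ (⊤ : ℕ∞) u → HasCompactSupport u →
        wNorm μ α p u ≤ C * wNorm μ b q (iteratedFDeriv ℝ l u) := by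
  set d : ℝ := (Module.finrank ℝ E : ℝ) with hd_def
  induction l with
  | zero =>
    intro F _ _ _ p q b α hq hqp _ hp hα _
    have hq0 : 0 < q := by linarith
    have hpq : p = q := by
      refine le_antisymm ?_ hqp
      rw [← one_div_le_one_div hq0 (by linarith)]
      simpa using hp
    refine ⟨1, fun u _ _ => ?_⟩
    subst hpq
    have hab : α = b := by rw [hα]; simp
    simp [wNorm, hab]
  | succ l ih =>
    intro F _ _ _ p q b α hq hqp hlq hp hα hpos
    have hq0 : 0 < q := by linarith
    have hp0 : 0 < p := by linarith
    push_cast at hlq hp hα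
    have hl0 : (0 : ℝ) ≤ l := Nat.cast_nonneg l
    have hl1 : (0 : ℝ) < l + 1 := by linarith
    have hd0 : 0 < d := lt_of_le_of_lt (by positivity) hlq
    have hpq : 1 / p ≤ 1 / q := one_div_le_one_div_of_le hq0 hqp
    obtain ⟨κ, hκ⟩ : ∃ κ : ℝ, κ = (1 / q - 1 / p) / (l + 1) := ⟨_, rfl⟩
    have hκ' : (l + 1) * κ = 1 / q - 1 / p := by rw [hκ]; field_simp
    have hκ0 : 0 ≤ κ := by rw [hκ]; exact div_nonneg (by linarith) hl1.le
    have hκd : κ ≤ 1 / d := by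
      rw [hκ, div_le_iff₀ hl1, one_div_mul_eq_div]; linarith
    have hlκ : l * κ ≤ l / d := by
      rw [← mul_one_div]; gcongr
    have hqd : (l + 1) / d < 1 / q := by
      rw [div_lt_div_iff₀ hd0 hq0, one_mul]; exact hlq
    have hsplit : (l + 1) / d = l / d + 1 / d := by ring
    have hd1 : 0 < 1 / d := by positivity
    obtain ⟨p₁, hp₁⟩ : ∃ p₁ : ℝ, p₁ = 1 / (1 / p + κ) := ⟨_, rfl⟩
    have hden : 0 < 1 / p + κ := by positivity
    have hp₁0 : 0 < p₁ := by rw [hp₁]; positivity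
    have hinv : 1 / p₁ = 1 / p + κ := by rw [hp₁, one_div_one_div]
    have hqp₁ : q ≤ p₁ := by
      rw [← one_div_le_one_div hp₁0 hq0, hinv]
      nlinarith
    have hp₁p : p₁ ≤ p := by
      rw [← one_div_le_one_div hp0 hp₁0, hinv]; linarith
    have hp₁d : p₁ < d := by
      rw [← one_div_lt_one_div hd0 hp₁0, hinv]; linarith
    obtain ⟨α₁, hα₁⟩ : ∃ α₁ : ℝ, α₁ = b - l + d * (1 / q - 1 / p₁) := ⟨_, rfl⟩
    have hαα₁ : α = α₁ - 1 + d * (1 / p₁ - 1 / p) := by rw [hα, hα₁]; ring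
    have hpos₁ : 1 < α₁ + d / p₁ := by
      have e : α₁ + d / p₁ = α + d / p + 1 := by rw [hαα₁]; ring
      linarith
    obtain ⟨C₁, hC₁⟩ := hardy_step (F := F) μ (q := p₁) (p := p) (b := α₁) (α := α)
      (by linarith) hp₁d hp₁p (by rw [hinv]; linarith) hαα₁ hpos₁
    obtain ⟨C₂, hC₂⟩ := ih (F := E →L[ℝ] F) (p := p₁) (q := q) (b := b) (α := α₁) hq hqp₁
      (by nlinarith) (by rw [hinv]; linarith) hα₁ (by linarith)
    refine ⟨C₁ * C₂, fun u hu h2u => ?_⟩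
    have h1 := hC₁ u (hu.of_le (by exact_mod_cast le_top)) h2u
    have h2 := hC₂ (fderiv ℝ u) (hu.fderiv_right (by simp)) (h2u.fderiv ℝ)
    have h3 : wNorm μ b q (iteratedFDeriv ℝ l (fderiv ℝ u)) =
        wNorm μ b q (iteratedFDeriv ℝ (l + 1) u) := by
      simp only [wNorm, norm_iteratedFDeriv_fderiv]
    rw [h3] at h2
    refine h1.trans ((mul_le_mul_right h2 _).trans (le_of_eq ?_))
    push_cast
    rw [mul_assoc]

/-- Finiteness comes from local integrability of `|x|^(a p)`, which is the condition `a p > -d`. -/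
lemma wNorm_ne_top {F : Type*} [NormedAddCommGroup F] (μ : Measure E)
    [μ.IsAddHaarMeasure] (hd : 0 < Module.finrank ℝ E) {a p : ℝ} (hp : 0 < p)
    (hap : -(Module.finrank ℝ E : ℝ) < a * p) {f : E → F} (hf : Continuous f)
    (h2f : HasCompactSupport f) : wNorm μ a p f ≠ ⊤ := by
  have hloc : LocallyIntegrable (fun x : E => ‖x‖ ^ (a * p)) μ :=
    locallyIntegrable_of_norm_le_rpow hd (C := 1) (α := -(a * p)) (by linarith)
      (Filter.Eventually.of_forall fun x => by
        rw [neg_neg, one_mul, Real.norm_of_nonneg (by positivity)])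
      (Measurable.aestronglyMeasurable (by fun_prop))
  have hint := hloc.integrable_smul_right_of_hasCompactSupport (g := fun x => ‖f x‖ ^ p)
    (hf.norm.rpow_const fun x => Or.inr hp.le)
    (h2f.comp_left (g := fun y => ‖y‖ ^ p) (by simp [hp.ne']))
  have hlt := hint.2
  rw [HasFiniteIntegral] at hlt
  have e : ∫⁻ x, ‖‖x‖ ^ (a * p) • ‖f x‖ ^ p‖ₑ ∂μ = wNorm μ a p f ^ p := by
    rw [wNorm_rpow μ hp]
    refine lintegral_congr fun x => ?_
    rw [enorm_smul, Real.enorm_of_nonneg (by positivity), Real.enorm_of_nonneg (by positivity),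
      ← ofReal_norm, ENNReal.ofReal_rpow_of_nonneg (norm_nonneg _) hp.le]
  rw [e] at hlt
  intro h
  simp [h, hp] at hlt

end

/-! ### Bochner integrals -/

section
variable {E F : Type*} [NormedAddCommGroup E] [MeasurableSpace E] [BorelSpace E]
  [NormedAddCommGroup F]

lemma integral_eq_wNorm_toReal (μ : Measure E) {a p : ℝ} (hp : 0 < p) {f : E → F}
    (hf : Continuous f) :
    (∫ x, ‖x‖ ^ (a * p) * ‖f x‖ ^ p ∂μ) ^ (1 / p) = (wNorm μ a p f).toReal := by
  have hm : Measurable fun x => ‖f x‖ := hf.norm.measurable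
  rw [integral_eq_lintegral_of_nonneg_ae
    (Filter.Eventually.of_forall fun x => by positivity)
    (Measurable.aestronglyMeasurable (by fun_prop))]
  have e : ∫⁻ x, ENNReal.ofReal (‖x‖ ^ (a * p) * ‖f x‖ ^ p) ∂μ = wNorm μ a p f ^ p := by
    rw [wNorm_rpow μ hp]
    refine lintegral_congr fun x => ?_
    rw [ENNReal.ofReal_mul (by positivity), ← ofReal_norm,
      ENNReal.ofReal_rpow_of_nonneg (norm_nonneg _) hp.le]
  rw [e, ENNReal.toReal_rpow, ← ENNReal.rpow_mul, mul_one_div_cancel hp.ne', ENNReal.rpow_one]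

end

/-- **Hardy inequality on ℝⁿ** (Lemma 1 of the paper). -/
theorem hardy_inequality (n l : ℕ) (hn : 0 < n) (hl : 0 < l) (p q γ β : ℝ)
    (h1q : 1 ≤ q) (hqp : q ≤ p) (hlq : (l : ℝ) * q < n)
    (hp : p ≤ (n : ℝ) * q / ((n : ℝ) - (l : ℝ) * q))
    (hrel : γ / p = β - l + (n : ℝ) * (1 / q - 1 / p))
    (hlow : -((n : ℝ) / p) < γ / p) :
    ∃ C : ℝ, 0 < C ∧ ∀ u : EuclideanSpace ℝ (Fin n) → ℝ,
      ContDiff ℝ (⊤ : ℕ∞) u → HasCompactSupport u →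
        (∫ x, ‖x‖ ^ γ * |u x| ^ p) ^ (1 / p) ≤
          C * (∫ x, ‖x‖ ^ (β * q) * ‖iteratedFDeriv ℝ l u x‖ ^ q) ^ (1 / q) := by
  have hq0 : 0 < q := by linarith
  have hp0 : 0 < p := by linarith
  have hn0 : (0 : ℝ) < n := by exact_mod_cast hn
  have hfr : Module.finrank ℝ (EuclideanSpace ℝ (Fin n)) = n := finrank_euclideanSpace_fin
  have hsub : 0 < (n : ℝ) - l * q := by linarith
  have hp' : 1 / q - l / (n : ℝ) ≤ 1 / p := by
    refine le_trans (le_of_eq ?_) (one_div_le_one_div_of_le hp0 hp)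
    field_simp
  have hγ : γ / p * p = γ := by field_simp
  -- `βq > lq - n`, so the weight on the right-hand side is locally integrable
  have hβ : -(n : ℝ) < β * q := by
    have h1 : 0 < β - l + n / q := by
      have e : γ / p + n / p = β - l + n / q := by rw [hrel]; ring
      linarith
    have h2 : 0 < (β - l + n / q) * q := mul_pos h1 hq0
    have h3 : (β - l + n / q) * q = β * q - l * q + n := by field_simp
    have h4 : 0 ≤ (l : ℝ) * q := by positivity
    linarith
  obtain ⟨C, hC⟩ := hardy_order (F := ℝ) (volume : Measure (EuclideanSpace ℝ (Fin n))) l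
    (p := p) (q := q) (b := β) (α := γ / p) h1q hqp (by rwa [hfr]) (by rwa [hfr])
    (by rwa [hfr]) (by rw [hfr]; linarith)
  refine ⟨C + 1, by positivity, fun u hu h2u => ?_⟩
  have hDc : Continuous (iteratedFDeriv ℝ l u) :=
    hu.continuous_iteratedFDeriv (by exact_mod_cast le_top)
  have hfin := wNorm_ne_top (volume : Measure (EuclideanSpace ℝ (Fin n))) (by rwa [hfr]) hq0
    (by rwa [hfr]) hDc (h2u.iteratedFDeriv (𝕜 := ℝ) l)
  have hL := integral_eq_wNorm_toReal (volume : Measure (EuclideanSpace ℝ (Fin n)))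
    (a := γ / p) hp0 hu.continuous
  rw [hγ] at hL
  simp only [Real.norm_eq_abs] at hL
  rw [hL, integral_eq_wNorm_toReal volume hq0 hDc]
  have h := ENNReal.toReal_mono (ENNReal.mul_ne_top ENNReal.coe_ne_top hfin) (hC u hu h2u)
  rw [ENNReal.toReal_mul, ENNReal.coe_toReal] at h
  refine h.trans ?_
  gcongr
  linarith
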